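/- If T : H1 → H2 is an invertible bounded operator of the form T = U + K with U unitary and K compact, then T⁻¹ is also of the form U' + K' with U' unitary and K' compact. -/

import Mathlib

section Resolvent

variable {R E F : Type*} [Ring R]
  [AddCommGroup E] [TopologicalSpace E] [IsTopologicalAddGroup E] [Module R E]
  [AddCommGroup F] [TopologicalSpace F] [IsTopologicalAddGroup F] [Module R F]
  {A B : E →L[R] F} {L M : F →L[R] E}

theorem leftInverse_sub_rightInverse_eq_comp_sub_comp
    (hLA : L.comp A = ContinuousLinearMap.id R E)
    (hBM : B.comp M = ContinuousLinearMap.id R F) :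
    L - M = (L.comp (B - A)).comp M :=
  calc
    L - M = L.comp (B.comp M) - (L.comp A).comp M := by
      rw [hBM, hLA, ContinuousLinearMap.comp_id, ContinuousLinearMap.id_comp]
    _ = (L.comp (B - A)).comp M := by
      rw [ContinuousLinearMap.comp_sub, ContinuousLinearMap.sub_comp,
        ContinuousLinearMap.comp_assoc L B M]

theorem isCompactOperator_leftInverse_sub_rightInverse
    (hLA : L.comp A = ContinuousLinearMap.id R E)
    (hBM : B.comp M = ContinuousLinearMap.id R F)
    (hBA : IsCompactOperator (B - A)) :
    IsCompactOperator (L - M) := by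
  have hcompact : IsCompactOperator ((L.comp (B - A)).comp M) := (hBA.clm_comp L).comp_clm M
  rwa [← leftInverse_sub_rightInverse_eq_comp_sub_comp hLA hBM] at hcompact

end Resolvent

theorem stmt0_general {R E F : Type*} [Ring R]
    [SeminormedAddCommGroup E] [Module R E] [SeminormedAddCommGroup F] [Module R F]
    {T : E →L[R] F} {S : F →L[R] E} (hST : S.comp T = ContinuousLinearMap.id R E)
    (U : E ≃ₗᵢ[R] F) {K : E →L[R] F} (hK : IsCompactOperator K)
    (hT : T = (U.toContinuousLinearEquiv : E →L[R] F) + K) :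
    ∃ (U' : F ≃ₗᵢ[R] E) (K' : F →L[R] E),
      IsCompactOperator K' ∧ S = (U'.toContinuousLinearEquiv : F →L[R] E) + K' := by
  have hUT : IsCompactOperator ((U.toContinuousLinearEquiv : E →L[R] F) - T) := by
    rw [hT, sub_add_cancel_left]
    exact hK.neg
  have hSU := isCompactOperator_leftInverse_sub_rightInverse hST
    U.toContinuousLinearEquiv.coe_comp_coe_symm hUT
  exact ⟨U.symm, _, hSU, (add_sub_cancel _ S).symm⟩

/-- If `T : H1 → H2` is an invertible bounded operator of the form `T = U + K` with `U`
unitary and `K` compact, then `T⁻¹` is also of the form unitary plus compact. -/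
theorem stmt0
    {H1 H2 : Type*} [NormedAddCommGroup H1] [InnerProductSpace ℂ H1] [CompleteSpace H1]
    [NormedAddCommGroup H2] [InnerProductSpace ℂ H2] [CompleteSpace H2]
    (T : H1 →L[ℂ] H2) (S : H2 →L[ℂ] H1)
    (hST : S.comp T = ContinuousLinearMap.id ℂ H1)
    (hTS : T.comp S = ContinuousLinearMap.id ℂ H2)
    (U : H1 ≃ₗᵢ[ℂ] H2) (K : H1 →L[ℂ] H2)
    (hK : IsCompactOperator K)
    (hT : T = (U.toContinuousLinearEquiv : H1 →L[ℂ] H2) + K) :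
    ∃ (U' : H2 ≃ₗᵢ[ℂ] H1) (K' : H2 →L[ℂ] H1),
      IsCompactOperator K' ∧
      S = (U'.toContinuousLinearEquiv : H2 →L[ℂ] H1) + K' := by
  exact stmt0_general hST U hK hT
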